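/- Let A = (a_{ij}) ∈ ℝ^{N×N} be a nonzero skew-symmetric matrix, a := max |a_{ij}|, t > 0, and k ≥ 1. Let Y_A(ξ_1), …, Y_A(ξ_k) be k independent copies of the random skew-symmetric matrix Y_A built from i.i.d. standard Gaussians, and let log Φ̃(t,A) := E log det(√t I_N + Y_A). Then for every r > 0, Pr( | (1/k) Σ_{i=1}^k log det(√t I_N + Y_A(ξ_i)) − log Φ̃(t,A) | ≥ N r ) ≤ 2 exp(−t k N r² / (2a²)). -/

import Mathlib

/-!
For skew-symmetric `Y`, the Cayley transform `2s (s + Y)⁻¹ - 1` is orthogonal. Since `Y_A(η)` is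
traceless, the derivative `tr ((s + Y_A(ξ))⁻¹ Y_A(η))` of `log det (s + Y_A(ξ))` in the direction
`η` is therefore `1 / (2s)` times the Frobenius pairing of `Y_A(η)` with an orthogonal matrix, so
that with `s = √t` the log-determinant is `L`-Lipschitz in the Gaussian weights with
`L² = a² N / (2t)`.

For an `L`-Lipschitz `f`, rotating a pair of independent standard Gaussians and integrating by parts
gives `|cov (f, g)| ≤ L 𝔼‖∇g‖`. With `g = exp (τ f)` this bounds the derivative of
`τ ↦ log 𝔼 exp (τ (f - 𝔼 f))` by `L² |τ|`, hence `f - 𝔼 f` is sub-Gaussian with variance proxy `L²`,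
and a Chernoff bound for the average of `k` copies concludes. The exponent obtained in this way is
twice the one asserted by the theorem.
-/

open MeasureTheory ProbabilityTheory Matrix

/-- Total weighted `k`-matching of the weighted graph encoded by the
skew-symmetric matrix `A`. -/
noncomputable def phiW {N : ℕ} (A : Matrix (Fin N) (Fin N) ℝ) (k : ℕ) : ℝ :=
  ∑ M ∈ Finset.univ.filter
      (fun M : Finset (Fin N × Fin N) =>
        ((∀ p ∈ M, p.1 < p.2) ∧
          ∀ p ∈ M, ∀ q ∈ M, p ≠ q →
            p.1 ≠ q.1 ∧ p.1 ≠ q.2 ∧ p.2 ≠ q.1 ∧ p.2 ≠ q.2) ∧ M.card = k),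
    ∏ p ∈ M, (A p.1 p.2) ^ 2

/-- The weighted matching polynomial `Φ(t, A)`. -/
noncomputable def PhiW {N : ℕ} (A : Matrix (Fin N) (Fin N) ℝ) (t : ℝ) : ℝ :=
  ∑ k ∈ Finset.range (N / 2 + 1), phiW A k * t ^ (N / 2 - k)

/-- `Φ(t,A)`, multiplied by `√t` when `N` is odd. -/
noncomputable def PhiFull {N : ℕ} (A : Matrix (Fin N) (Fin N) ℝ) (t : ℝ) : ℝ :=
  (if Even N then 1 else Real.sqrt t) * PhiW A t

/-- Index type of the strictly upper-triangular positions. -/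
abbrev PairIdx (N : ℕ) := {p : Fin N × Fin N // p.1 < p.2}

/-- The canonical product of standard Gaussian measures, one for each edge slot. -/
noncomputable def gaussPi (N : ℕ) : Measure (PairIdx N → ℝ) :=
  Measure.pi fun _ => gaussianReal 0 1

/-- The sample `Y_A(ξ)` of the random skew-symmetric matrix `Y_A`. -/
noncomputable def sampleY {N : ℕ} (A : Matrix (Fin N) (Fin N) ℝ)
    (ξ : PairIdx N → ℝ) : Matrix (Fin N) (Fin N) ℝ :=
  Matrix.of fun i j =>
    if h : i < j then A i j * ξ ⟨(i, j), h⟩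
    else if h : j < i then A i j * ξ ⟨(j, i), h⟩
    else 0

/-- `log Φ̃(t, A) = E log det(√t I_N + Y_A)` for i.i.d. standard Gaussian entries. -/
noncomputable def logPhiTilde {N : ℕ} (t : ℝ) (A : Matrix (Fin N) (Fin N) ℝ) : ℝ :=
  ∫ ξ, Real.log ((Real.sqrt t • (1 : Matrix (Fin N) (Fin N) ℝ) + sampleY A ξ).det) ∂(gaussPi N)

/-- The constant `C₁ = -(1/√(2π)) ∫ log(x²) e^{-x²/2} dx`. -/
noncomputable def C1 : ℝ :=
  -(Real.sqrt (2 * Real.pi))⁻¹ * ∫ x : ℝ, Real.log (x ^ 2) * Real.exp (-x ^ 2 / 2)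

section Herbst

lemma norm_le_of_norm_deriv_le_mul_abs {F : Type*} [NormedAddCommGroup F] [NormedSpace ℝ F]
    {f f' : ℝ → F} {c : ℝ} (hf : ∀ t, HasDerivAt f (f' t) t) (h0 : f 0 = 0)
    (hbound : ∀ t, ‖f' t‖ ≤ c * |t|) (t : ℝ) : ‖f t‖ ≤ c * t ^ 2 / 2 := by
  have hft : ∀ u : ℝ, HasDerivAt (fun u => f (u * t)) (t • f' (u * t)) u := fun u => by
    simpa [Function.comp_def] using (hf (u * t)).scomp u ((hasDerivAt_id u).mul_const t)
  have hB : ∀ u : ℝ, HasDerivAt (fun u => c * t ^ 2 / 2 * u ^ 2) (c * t ^ 2 * u) u := fun u =>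
    ((hasDerivAt_pow 2 u).const_mul (c * t ^ 2 / 2)).congr_deriv (by push_cast; ring)
  have := image_norm_le_of_norm_deriv_right_le_deriv_boundary (a := 0) (b := 1)
    (fun u _ => (hft u).continuousAt.continuousWithinAt) (fun u _ => (hft u).hasDerivWithinAt)
    (by simp [h0]) hB (fun u hu => ?_) (Set.right_mem_Icc.2 zero_le_one)
  · simpa using this
  · calc ‖t • f' (u * t)‖ ≤ |t| * (c * |u * t|) := by
          rw [norm_smul, Real.norm_eq_abs]; gcongr; exact hbound _
      _ = c * t ^ 2 * u := by rw [abs_mul, abs_of_nonneg hu.1, ← sq_abs t]; ring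

variable {Ω : Type*} [MeasurableSpace Ω] {μ : Measure Ω} {X : Ω → ℝ}

lemma memLp_two_exp_mul (hexp : ∀ t, Integrable (fun ω => Real.exp (t * X ω)) μ) (t : ℝ) :
    MemLp (fun ω => Real.exp (t * X ω)) 2 μ := by
  rw [memLp_two_iff_integrable_sq (hexp t).1]
  simpa only [← Real.exp_nat_mul, ← mul_assoc] using hexp ((2 : ℕ) * t)

variable [IsProbabilityMeasure μ]

lemma hasDerivAt_cgf_sub_mul_integral (hexp : ∀ t, Integrable (fun ω => Real.exp (t * X ω)) μ)
    (t : ℝ) :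
    HasDerivAt (fun t => cgf X μ t - t * μ[X])
      (cov[X, fun ω => Real.exp (t * X ω); μ] / mgf X μ t) t := by
  have huniv : integrableExpSet X μ = Set.univ := Set.eq_univ_of_forall hexp
  have hmem : ∀ t, t ∈ interior (integrableExpSet X μ) := by simp [huniv]
  have hX : MemLp X 2 μ := memLp_of_mem_interior_integrableExpSet (hmem 0) 2
  have hpos : mgf X μ t ≠ 0 := (mgf_pos (hexp t)).ne'
  refine (((hasDerivAt_mgf (hmem t)).log hpos).sub
    ((hasDerivAt_id t).mul_const μ[X])).congr_deriv ?_
  rw [covariance_eq_sub hX (memLp_two_exp_mul hexp t), sub_div, ← mgf,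
    mul_div_cancel_right₀ _ hpos, one_mul]
  rfl

theorem hasSubgaussianMGF_sub_integral_of_abs_covariance_exp_le {c : NNReal}
    (hexp : ∀ t, Integrable (fun ω => Real.exp (t * X ω)) μ)
    (hcov : ∀ t, |cov[X, fun ω => Real.exp (t * X ω); μ]| ≤ c * |t| * mgf X μ t) :
    HasSubgaussianMGF (fun ω => X ω - μ[X]) c μ := by
  refine ⟨fun t => ?_, fun t => ?_⟩
  · simp_rw [mul_sub, Real.exp_sub]
    exact (hexp t).div_const _
  · have hmgf : mgf (fun ω => X ω - μ[X]) μ t = Real.exp (cgf X μ t - t * μ[X]) := by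
      simp_rw [sub_eq_add_neg, mgf_add_const, ← exp_cgf (hexp t), ← Real.exp_add, mul_neg]
    rw [hmgf, Real.exp_le_exp]
    refine (le_abs_self _).trans (norm_le_of_norm_deriv_le_mul_abs
      (hasDerivAt_cgf_sub_mul_integral hexp) (by simp) (fun s => ?_) t)
    rw [norm_div, Real.norm_of_nonneg mgf_nonneg, div_le_iff₀ (mgf_pos (hexp s))]
    exact hcov s

end Herbst

section StandardGaussian

open Module Real
open scoped Gradient RealInnerProductSpace

variable {E : Type*} [NormedAddCommGroup E] [InnerProductSpace ℝ E] {f g : E → ℝ} {L : NNReal}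

lemma cos_smul_sub_sin_smul_rotation (θ : ℝ) (p : E × E) :
    cos θ • (ContinuousLinearMap.rotation θ p).1 - sin θ • (ContinuousLinearMap.rotation θ p).2
      = p.1 := by
  have h : p.1 = (cos θ ^ 2 + sin θ ^ 2) • p.1 := by rw [cos_sq_add_sin_sq, one_smul]
  conv_rhs => rw [h]
  simp only [ContinuousLinearMap.rotation_apply]
  module

lemma hasDerivAt_fst_rotation (p : E × E) (θ : ℝ) :
    HasDerivAt (fun θ => (ContinuousLinearMap.rotation θ p).1)
      (ContinuousLinearMap.rotation θ p).2 θ :=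
  ((hasDerivAt_cos θ).smul_const p.1).add ((hasDerivAt_sin θ).smul_const p.2)

lemma norm_snd_rotation_le (θ : ℝ) (p : E × E) :
    ‖(ContinuousLinearMap.rotation θ p).2‖ ≤ ‖p.1‖ + ‖p.2‖ := by
  simp only [ContinuousLinearMap.rotation_apply]
  refine (norm_add_le _ _).trans ?_
  rw [norm_smul, norm_smul, norm_neg]
  exact add_le_add (mul_le_of_le_one_left (norm_nonneg _) (abs_sin_le_one θ))
    (mul_le_of_le_one_left (norm_nonneg _) (abs_cos_le_one θ))

lemma norm_fderiv_exp_mul_le (hf : Differentiable ℝ f) (hfL : LipschitzWith L f) (t : ℝ) (x : E) :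
    ‖fderiv ℝ (fun y => exp (t * f y)) x‖ ≤ L * |t| * exp (t * f x) := by
  rw [(((hf x).hasFDerivAt.const_mul t).exp).fderiv, norm_smul, norm_smul, norm_eq_abs t,
    norm_eq_abs (exp _), abs_exp, mul_comm (exp _), mul_comm |t|]
  gcongr
  exact norm_fderiv_le_of_lipschitz ℝ hfL

/-- The Lebesgue density of `stdGaussian E`. -/
noncomputable def stdGaussianPDF (x : E) : ℝ :=
  (2 * π) ^ (-(finrank ℝ E : ℝ) / 2) * exp (-‖x‖ ^ 2 / 2)

lemma stdGaussianPDF_nonneg (x : E) : 0 ≤ stdGaussianPDF x := by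
  unfold stdGaussianPDF; positivity

lemma hasFDerivAt_stdGaussianPDF (x : E) :
    HasFDerivAt stdGaussianPDF (-stdGaussianPDF x • innerSL ℝ x) x := by
  have h := ((((hasStrictFDerivAt_norm_sq x).hasFDerivAt.neg).mul_const (1 / 2)).exp).const_mul
    ((2 * π) ^ (-(finrank ℝ E : ℝ) / 2))
  simp only [mul_one_div] at h
  refine h.congr_fderiv ?_
  ext y
  simp [stdGaussianPDF]
  ring

variable [FiniteDimensional ℝ E]

lemma norm_gradient_le_of_lipschitzWith (hf : LipschitzWith L f) (x : E) : ‖∇ f x‖ ≤ L := by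
  rw [gradient, LinearIsometryEquiv.norm_map]
  exact norm_fderiv_le_of_lipschitz ℝ hf

variable [MeasurableSpace E] [BorelSpace E]

lemma integral_stdGaussianPDF_mul_cexp (t : E) :
    ∫ x : E, (stdGaussianPDF x : ℂ) * Complex.exp (⟪x, t⟫ * Complex.I)
      = Complex.exp (-‖t‖ ^ 2 / 2) := by
  have h := GaussianFourier.integral_cexp_neg_mul_sq_norm_add (V := E)
    (b := 1 / 2) (by norm_num) Complex.I t
  calc ∫ x : E, (stdGaussianPDF x : ℂ) * Complex.exp (⟪x, t⟫ * Complex.I)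
      = (((2 * π) ^ (-(finrank ℝ E : ℝ) / 2) : ℝ) : ℂ)
          * ∫ x : E, Complex.exp (-(1 / 2) * ‖x‖ ^ 2 + Complex.I * ⟪t, x⟫) := by
        rw [← integral_const_mul]
        congr with x
        simp only [stdGaussianPDF, Complex.ofReal_mul, Complex.ofReal_exp, mul_assoc,
          ← Complex.exp_add, real_inner_comm x t]
        push_cast
        ring_nf
    _ = Complex.exp (-‖t‖ ^ 2 / 2) := by
        rw [h, ← mul_assoc, Complex.ofReal_cpow (by positivity), div_div_eq_mul_div, div_one]
        push_cast
        rw [mul_comm (π : ℂ) 2, ← Complex.cpow_add _ _ (by simp [pi_ne_zero]), neg_div,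
          neg_add_cancel, Complex.cpow_zero, one_mul, Complex.I_sq]
        congr 1
        ring

lemma integrable_stdGaussianPDF : Integrable (stdGaussianPDF (E := E)) := by
  have h := integral_stdGaussianPDF_mul_cexp (0 : E)
  have : Integrable fun x : E => (stdGaussianPDF x : ℂ) := by
    refine Integrable.of_integral_ne_zero ?_
    simp only [inner_zero_right, Complex.ofReal_zero, zero_mul, Complex.exp_zero, mul_one] at h
    rw [h]
    exact Complex.exp_ne_zero _
  exact this.re

lemma stdGaussian_eq_withDensity :
    stdGaussian E = volume.withDensity fun x => ENNReal.ofReal (stdGaussianPDF x) := by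
  have := isFiniteMeasure_withDensity_ofReal (integrable_stdGaussianPDF (E := E)).2
  refine Measure.ext_of_charFun (funext fun t => ?_)
  rw [charFun_stdGaussian, charFun_apply, integral_withDensity_eq_integral_toReal_smul₀
    integrable_stdGaussianPDF.aestronglyMeasurable.aemeasurable.ennreal_ofReal (by simp)]
  simp_rw [ENNReal.toReal_ofReal (stdGaussianPDF_nonneg _), Complex.real_smul]
  exact (integral_stdGaussianPDF_mul_cexp t).symm

lemma integrable_stdGaussian_iff {φ : E → ℝ} :
    Integrable φ (stdGaussian E) ↔ Integrable fun x => stdGaussianPDF x * φ x := by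
  rw [stdGaussian_eq_withDensity, integrable_withDensity_iff_integrable_smul₀'
    integrable_stdGaussianPDF.aestronglyMeasurable.aemeasurable.ennreal_ofReal (by simp)]
  simp_rw [ENNReal.toReal_ofReal (stdGaussianPDF_nonneg _), smul_eq_mul]

lemma integral_stdGaussian (φ : E → ℝ) :
    ∫ x, φ x ∂stdGaussian E = ∫ x, stdGaussianPDF x * φ x := by
  rw [stdGaussian_eq_withDensity, integral_withDensity_eq_integral_toReal_smul₀
    integrable_stdGaussianPDF.aestronglyMeasurable.aemeasurable.ennreal_ofReal (by simp)]
  simp_rw [ENNReal.toReal_ofReal (stdGaussianPDF_nonneg _), smul_eq_mul]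

lemma integral_inner_mul_stdGaussian {φ : E → ℝ} (hφ : Differentiable ℝ φ) (h : E)
    (hφi : Integrable φ (stdGaussian E))
    (hmul : Integrable (fun x => ⟪h, x⟫ * φ x) (stdGaussian E))
    (hderiv : Integrable (fun x => fderiv ℝ φ x h) (stdGaussian E)) :
    ∫ x, ⟪h, x⟫ * φ x ∂stdGaussian E = ∫ x, fderiv ℝ φ x h ∂stdGaussian E := by
  have hfderiv : ∀ x, fderiv ℝ (stdGaussianPDF (E := E)) x h * φ x
      = -(stdGaussianPDF x * (⟪h, x⟫ * φ x)) := fun x => by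
    rw [(hasFDerivAt_stdGaussianPDF x).fderiv, real_inner_comm x h]
    simp only [FunLike.coe_smul, Pi.smul_apply, innerSL_apply_apply, smul_eq_mul]
    ring
  rw [integrable_stdGaussian_iff] at hφi hmul hderiv
  rw [integral_stdGaussian, integral_stdGaussian,
    integral_mul_fderiv_eq_neg_fderiv_mul_of_integrable (by simp_rw [hfderiv]; exact hmul.neg)
    hderiv hφi (fun x _ => (hasFDerivAt_stdGaussianPDF x).differentiableAt)
      fun x _ => hφ x]
  simp_rw [hfderiv, integral_neg, neg_neg]

lemma measurePreserving_rotation_stdGaussian (θ : ℝ) :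
    MeasurePreserving (ContinuousLinearMap.rotation (E := E) θ)
      ((stdGaussian E).prod (stdGaussian E)) ((stdGaussian E).prod (stdGaussian E)) :=
  ⟨by fun_prop, IsGaussian.map_rotation_eq_self integral_id_stdGaussian θ⟩

lemma integral_inner_mul_comp_prod_stdGaussian {w : E → E} (hg : Differentiable ℝ g)
    {c s : ℝ}
    (hgi : Integrable (fun p : E × E => g (c • p.1 - s • p.2))
      ((stdGaussian E).prod (stdGaussian E)))
    (hmul : Integrable (fun p : E × E => ⟪w p.1, p.2⟫ * g (c • p.1 - s • p.2))
      ((stdGaussian E).prod (stdGaussian E)))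
    (hderiv : Integrable (fun p : E × E => fderiv ℝ g (c • p.1 - s • p.2) (w p.1))
      ((stdGaussian E).prod (stdGaussian E))) :
    ∫ p : E × E, ⟪w p.1, p.2⟫ * g (c • p.1 - s • p.2) ∂(stdGaussian E).prod (stdGaussian E)
      = -s * ∫ p : E × E, fderiv ℝ g (c • p.1 - s • p.2) (w p.1)
          ∂(stdGaussian E).prod (stdGaussian E) := by
  rw [← integral_const_mul, integral_prod _ hmul, integral_prod _ (hderiv.const_mul _)]
  refine integral_congr_ae ?_
  filter_upwards [hgi.prod_right_ae, hmul.prod_right_ae, hderiv.prod_right_ae] with u hu hmulu hdu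
  have hfderiv : ∀ v, fderiv ℝ (fun v => g (c • u - s • v)) v (w u)
      = -s * fderiv ℝ g (c • u - s • v) (w u) := fun v => by
    have h := (hg (c • u - s • v)).hasFDerivAt.comp v
      (((hasFDerivAt_id v).const_smul s).const_sub (c • u))
    have h' : HasFDerivAt (fun v => g (c • u - s • v)) _ v := h
    rw [h'.fderiv]
    simp
  have := integral_inner_mul_stdGaussian (φ := fun v => g (c • u - s • v)) (by fun_prop) (w u)
    hu hmulu (by simp_rw [hfderiv]; exact hdu.const_mul _)
  simpa only [hfderiv] using this

lemma memLp_stdGaussian_of_lipschitzWith (hf : LipschitzWith L f) :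
    MemLp f 2 (stdGaussian E) := by
  have h : LipschitzWith L fun x => f x - f 0 := by simpa using hf.sub (LipschitzWith.const (f 0))
  have h2 := (h.comp_memLp (sub_self _) (IsGaussian.memLp_two_id (μ := stdGaussian E))).add
    (memLp_const (f 0))
  exact h2.ae_eq (.of_forall fun x => by simp)

lemma integrable_comp_rotation_mul (hf : MemLp f 2 (stdGaussian E))
    (hg : MemLp g 2 (stdGaussian E)) (θ : ℝ) :
    Integrable (fun p : E × E => f (ContinuousLinearMap.rotation θ p).1 * g p.1)
      ((stdGaussian E).prod (stdGaussian E)) :=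
  ((hf.comp_fst (stdGaussian E)).comp_measurePreserving
    (measurePreserving_rotation_stdGaussian θ)).integrable_mul (hg.comp_fst (stdGaussian E))

lemma measurable_fderiv_comp_apply (f : E → ℝ) {α : Type*} [MeasurableSpace α] {u v : α → E}
    (hu : Measurable u) (hv : Measurable v) : Measurable fun a => fderiv ℝ f (u a) (v a) :=
  ContinuousLinearMap.measurable_apply₂.comp (((measurable_fderiv ℝ f).comp hu).prodMk hv)

lemma hasDerivAt_integral_comp_rotation_mul (hf : Differentiable ℝ f)
    (hfL : LipschitzWith L f) (hg : MemLp g 2 (stdGaussian E)) (θ : ℝ) :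
    Integrable (fun p : E × E => fderiv ℝ f (ContinuousLinearMap.rotation θ p).1
        (ContinuousLinearMap.rotation θ p).2 * g p.1) ((stdGaussian E).prod (stdGaussian E)) ∧
    HasDerivAt (fun θ => ∫ p : E × E, f (ContinuousLinearMap.rotation θ p).1 * g p.1
        ∂(stdGaussian E).prod (stdGaussian E))
      (∫ p : E × E, fderiv ℝ f (ContinuousLinearMap.rotation θ p).1
        (ContinuousLinearMap.rotation θ p).2 * g p.1
        ∂(stdGaussian E).prod (stdGaussian E)) θ := by
  have hint := integrable_comp_rotation_mul (memLp_stdGaussian_of_lipschitzWith hfL) hg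
  have hid : MemLp id 2 (stdGaussian E) := IsGaussian.memLp_two_id
  have hg1 := hg.comp_fst (stdGaussian E)
  have hbound : Integrable (fun p : E × E => L * (‖p.1‖ + ‖p.2‖) * ‖g p.1‖)
      ((stdGaussian E).prod (stdGaussian E)) :=
    (((hid.comp_fst (stdGaussian E)).norm.add (hid.comp_snd (stdGaussian E)).norm).const_mul
      (L : ℝ)).integrable_mul hg1.norm
  refine (hasDerivAt_integral_of_dominated_loc_of_deriv_le
    (F := fun θ (p : E × E) => f (ContinuousLinearMap.rotation θ p).1 * g p.1)
    (F' := fun θ p => fderiv ℝ f (ContinuousLinearMap.rotation θ p).1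
      (ContinuousLinearMap.rotation θ p).2 * g p.1)
    Filter.univ_mem (.of_forall fun θ => (hint θ).aestronglyMeasurable) (hint θ) ?_
    (.of_forall fun p θ _ => ?_) hbound (.of_forall fun p θ _ => ?_))
  · exact (measurable_fderiv_comp_apply f (by fun_prop)
      (by fun_prop)).aestronglyMeasurable.mul hg1.aestronglyMeasurable
  · rw [norm_mul]
    gcongr
    exact (fderiv ℝ f _).le_of_opNorm_le_of_le (norm_fderiv_le_of_lipschitz ℝ hfL)
      (norm_snd_rotation_le θ p)
  · exact (HasFDerivAt.comp_hasDerivAt (f := fun θ => (ContinuousLinearMap.rotation θ p).1) θ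
      (hf _).hasFDerivAt (hasDerivAt_fst_rotation p θ)).mul_const (g p.1)

lemma measurable_gradient (f : E → ℝ) : Measurable (∇ f) :=
  (InnerProductSpace.toDual ℝ E).symm.continuous.measurable.comp (measurable_fderiv ℝ f)

lemma integrable_fderiv_gradient_rotation (hfL : LipschitzWith L f)
    (hg : Integrable (fderiv ℝ g) (stdGaussian E)) (θ : ℝ) :
    Integrable (fun p : E × E => fderiv ℝ g p.1 (∇ f (ContinuousLinearMap.rotation θ p).1))
      ((stdGaussian E).prod (stdGaussian E)) := by
  refine ((hg.norm.mul_const (L : ℝ)).comp_fst (stdGaussian E)).mono' ?_ (.of_forall fun p => ?_)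
  · exact (measurable_fderiv_comp_apply g measurable_fst
      ((measurable_gradient f).comp (by fun_prop))).aestronglyMeasurable
  · exact (fderiv ℝ g p.1).le_opNorm_of_le (norm_gradient_le_of_lipschitzWith hfL _)

lemma integral_fderiv_rotation_mul (hf : Differentiable ℝ f)
    (hfL : LipschitzWith L f) (hg : Differentiable ℝ g) (hg2 : MemLp g 2 (stdGaussian E))
    (hg' : Integrable (fderiv ℝ g) (stdGaussian E)) (θ : ℝ) :
    ∫ p : E × E, fderiv ℝ f (ContinuousLinearMap.rotation θ p).1
        (ContinuousLinearMap.rotation θ p).2 * g p.1 ∂(stdGaussian E).prod (stdGaussian E)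
      = -sin θ * ∫ p : E × E, fderiv ℝ g p.1 (∇ f (ContinuousLinearMap.rotation θ p).1)
        ∂(stdGaussian E).prod (stdGaussian E) := by
  have hR := measurePreserving_rotation_stdGaussian (E := E) θ
  have hint := (hasDerivAt_integral_comp_rotation_mul hf hfL hg2 θ).1
  have hint' := integrable_fderiv_gradient_rotation hfL hg' θ
  have hG : AEStronglyMeasurable (fun q : E × E => g (cos θ • q.1 - sin θ • q.2))
      ((stdGaussian E).prod (stdGaussian E)) := by
    have := hg.continuous
    fun_prop
  have hF : AEStronglyMeasurable
      (fun q : E × E => ⟪∇ f q.1, q.2⟫ * g (cos θ • q.1 - sin θ • q.2))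
      ((stdGaussian E).prod (stdGaussian E)) :=
    (((measurable_gradient f).comp measurable_fst).inner measurable_snd).aestronglyMeasurable.mul hG
  have hG' : AEStronglyMeasurable
      (fun q : E × E => fderiv ℝ g (cos θ • q.1 - sin θ • q.2) (∇ f q.1))
      ((stdGaussian E).prod (stdGaussian E)) :=
    (measurable_fderiv_comp_apply g (by fun_prop)
      ((measurable_gradient f).comp measurable_fst)).aestronglyMeasurable
  have hIBP := integral_inner_mul_comp_prod_stdGaussian hg
    ((hR.integrable_comp hG).1 ?_) ((hR.integrable_comp hF).1 ?_) ((hR.integrable_comp hG').1 ?_)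
  · rw [← hR.map_eq] at hF hG' hIBP
    rw [integral_map hR.aemeasurable hF, integral_map hR.aemeasurable hG'] at hIBP
    simpa only [cos_smul_sub_sin_smul_rotation, inner_gradient_left] using hIBP
  · simpa only [Function.comp_def, cos_smul_sub_sin_smul_rotation] using
      (hg2.integrable one_le_two).comp_fst (stdGaussian E)
  · simpa only [Function.comp_def, cos_smul_sub_sin_smul_rotation, inner_gradient_left] using hint
  · simpa only [Function.comp_def, cos_smul_sub_sin_smul_rotation] using hint'

lemma norm_integral_fderiv_rotation_mul_le (hf : Differentiable ℝ f)
    (hfL : LipschitzWith L f) (hg : Differentiable ℝ g) (hg2 : MemLp g 2 (stdGaussian E))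
    (hg' : Integrable (fderiv ℝ g) (stdGaussian E)) (θ : ℝ) :
    ‖∫ p : E × E, fderiv ℝ f (ContinuousLinearMap.rotation θ p).1
        (ContinuousLinearMap.rotation θ p).2 * g p.1 ∂(stdGaussian E).prod (stdGaussian E)‖
      ≤ |sin θ| * (L * ∫ x, ‖fderiv ℝ g x‖ ∂stdGaussian E) := by
  rw [integral_fderiv_rotation_mul hf hfL hg hg2 hg', norm_mul, norm_neg, norm_eq_abs (sin θ)]
  gcongr
  calc ‖∫ p : E × E, fderiv ℝ g p.1 (∇ f (ContinuousLinearMap.rotation θ p).1)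
        ∂(stdGaussian E).prod (stdGaussian E)‖
      ≤ ∫ p : E × E, L * ‖fderiv ℝ g p.1‖ ∂(stdGaussian E).prod (stdGaussian E) := by
        refine norm_integral_le_of_norm_le ((hg'.norm.const_mul _).comp_fst (stdGaussian E))
          (.of_forall fun p => ?_)
        rw [mul_comm]
        exact (fderiv ℝ g p.1).le_opNorm_of_le (norm_gradient_le_of_lipschitzWith hfL _)
    _ = L * ∫ x, ‖fderiv ℝ g x‖ ∂stdGaussian E := by
        rw [integral_const_mul, integral_fun_fst fun x => ‖fderiv ℝ g x‖]
        simp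

theorem abs_covariance_stdGaussian_le (hf : Differentiable ℝ f)
    (hfL : LipschitzWith L f) (hg : Differentiable ℝ g) (hg2 : MemLp g 2 (stdGaussian E))
    (hg' : Integrable (fderiv ℝ g) (stdGaussian E)) :
    |cov[f, g; stdGaussian E]| ≤ L * ∫ x, ‖fderiv ℝ g x‖ ∂stdGaussian E := by
  set C := L * ∫ x, ‖fderiv ℝ g x‖ ∂stdGaussian E
  set φ : ℝ → ℝ := fun θ => ∫ p : E × E, f (ContinuousLinearMap.rotation θ p).1 * g p.1
    ∂(stdGaussian E).prod (stdGaussian E)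
  have hφ θ := (hasDerivAt_integral_comp_rotation_mul hf hfL hg2 θ).2
  have hφ0 : φ 0 = ∫ x, f x * g x ∂stdGaussian E := by
    simpa [φ, ContinuousLinearMap.rotation_apply] using
      integral_fun_fst (μ := stdGaussian E) (ν := stdGaussian E) fun x => f x * g x
  have hφ1 : φ (π / 2) = (∫ x, f x ∂stdGaussian E) * ∫ x, g x ∂stdGaussian E := by
    simpa [φ, ContinuousLinearMap.rotation_apply, mul_comm] using
      integral_prod_mul (μ := stdGaussian E) (ν := stdGaussian E) g f
  have hbound := image_norm_le_of_norm_deriv_right_le_deriv_boundary (f := fun θ => φ θ - φ 0)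
    (B := fun θ => C * (1 - cos θ)) (a := 0) (b := π / 2)
    (fun θ _ => ((hφ θ).sub_const _).continuousAt.continuousWithinAt)
    (fun θ _ => ((hφ θ).sub_const _).hasDerivWithinAt) (by simp)
    (fun θ => ((hasDerivAt_cos θ).const_sub 1).const_mul C) (fun θ hθ => ?_)
    (Set.right_mem_Icc.2 pi_div_two_pos.le)
  · rw [covariance_eq_sub (memLp_stdGaussian_of_lipschitzWith hfL) hg2, abs_sub_comm]
    simpa [hφ0, hφ1] using hbound
  · refine (norm_integral_fderiv_rotation_mul_le hf hfL hg hg2 hg' θ).trans_eq ?_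
    rw [abs_of_nonneg (sin_nonneg_of_nonneg_of_le_pi hθ.1 (by linarith [hθ.2, pi_pos])),
      neg_neg, mul_comm]

lemma integrable_exp_mul_norm_stdGaussian (c : ℝ) :
    Integrable (fun x : E => exp (c * ‖x‖)) (stdGaussian E) := by
  obtain ⟨C, hC, hint⟩ := IsGaussian.exists_integrable_exp_sq (stdGaussian E)
  refine (hint.const_mul (exp (c ^ 2 / (4 * C)))).mono' (by fun_prop) (.of_forall fun x => ?_)
  rw [norm_eq_abs, abs_exp, ← exp_add, exp_le_exp]
  have hsq : 0 ≤ (2 * C * ‖x‖ - c) ^ 2 / (4 * C) := by positivity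
  have : (2 * C * ‖x‖ - c) ^ 2 / (4 * C) = c ^ 2 / (4 * C) + C * ‖x‖ ^ 2 - c * ‖x‖ := by
    field_simp
    ring
  linarith

lemma integrable_exp_mul_stdGaussian_of_lipschitzWith
    (hf : LipschitzWith L f) (t : ℝ) :
    Integrable (fun x => exp (t * f x)) (stdGaussian E) := by
  have hfc := hf.continuous
  refine ((integrable_exp_mul_norm_stdGaussian (|t| * L)).const_mul (exp (t * f 0))).mono'
    (by fun_prop) (.of_forall fun x => ?_)
  rw [norm_eq_abs, abs_exp, ← exp_add, exp_le_exp, ← sub_le_iff_le_add', ← mul_sub]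
  calc t * (f x - f 0) ≤ |t| * |f x - f 0| := (le_abs_self _).trans_eq (abs_mul _ _)
    _ ≤ |t| * (L * ‖x‖) := by gcongr; simpa using hf.norm_sub_le x 0
    _ = |t| * L * ‖x‖ := (mul_assoc _ _ _).symm

theorem hasSubgaussianMGF_stdGaussian_of_lipschitzWith
    (hf : Differentiable ℝ f) (hfL : LipschitzWith L f) :
    HasSubgaussianMGF (fun x => f x - ∫ y, f y ∂stdGaussian E) (L ^ 2) (stdGaussian E) := by
  have hexp := integrable_exp_mul_stdGaussian_of_lipschitzWith hfL
  refine hasSubgaussianMGF_sub_integral_of_abs_covariance_exp_le hexp fun t => ?_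
  have hfexp : Differentiable ℝ fun x => exp (t * f x) := by fun_prop
  have hfderiv : Integrable (fderiv ℝ fun x => exp (t * f x)) (stdGaussian E) :=
    ((hexp t).const_mul (L * |t|)).mono' (measurable_fderiv ℝ _).aestronglyMeasurable
      (.of_forall (norm_fderiv_exp_mul_le hf hfL t))
  calc |cov[f, fun x => exp (t * f x); stdGaussian E]|
      ≤ L * ∫ x, ‖fderiv ℝ (fun x => exp (t * f x)) x‖ ∂stdGaussian E :=
        abs_covariance_stdGaussian_le hf hfL hfexp (memLp_two_exp_mul hexp t) hfderiv
    _ ≤ L * ∫ x, L * |t| * exp (t * f x) ∂stdGaussian E := by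
        gcongr
        · exact hfderiv.norm
        · exact (hexp t).const_mul _
        · exact fun x => norm_fderiv_exp_mul_le hf hfL t x
    _ = (L ^ 2 : NNReal) * |t| * mgf f (stdGaussian E) t := by
        rw [integral_const_mul, mgf]
        push_cast
        ring

end StandardGaussian

section Averages

variable {Ω : Type*} [MeasurableSpace Ω] {μ : Measure Ω} {X : Ω → ℝ} {c : NNReal}

lemma measure_ge_abs_le_of_hasSubgaussianMGF [IsFiniteMeasure μ] (hX : HasSubgaussianMGF X c μ)
    {ε : ℝ} (hε : 0 ≤ ε) :
    μ {ω | ε ≤ |X ω|} ≤ ENNReal.ofReal (2 * Real.exp (-ε ^ 2 / (2 * c))) := by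
  have hunion : {ω | ε ≤ |X ω|} = {ω | ε ≤ X ω} ∪ {ω | ε ≤ (-X) ω} :=
    Set.ext fun ω => le_abs (a := ε) (b := X ω)
  rw [hunion, ← ofReal_measureReal, two_mul]
  exact ENNReal.ofReal_le_ofReal ((measureReal_union_le _ _).trans
    (add_le_add (hX.measure_ge_le hε) (hX.neg.measure_ge_le hε)))

lemma hasSubgaussianMGF_average_pi [IsProbabilityMeasure μ] {ι : Type*} [Fintype ι]
    (hX : HasSubgaussianMGF X c μ) :
    HasSubgaussianMGF (fun ξ : ι → Ω => (Fintype.card ι : ℝ)⁻¹ * ∑ i, X (ξ i))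
      (c / Fintype.card ι) (Measure.pi fun _ => μ) := by
  have hcopy : ∀ i, HasSubgaussianMGF (fun ξ : ι → Ω => X (ξ i)) c (Measure.pi fun _ => μ) :=
    fun i => by
      have heval := measurePreserving_eval (fun _ : ι => μ) i
      exact .of_map heval.aemeasurable (heval.map_eq.symm ▸ hX)
  have hindep : iIndepFun (fun i (ξ : ι → Ω) => X (ξ i)) (Measure.pi fun _ => μ) :=
    iIndepFun_pi fun _ => hX.aemeasurable
  convert (HasSubgaussianMGF.sum_of_iIndepFun hindep (s := Finset.univ)
    fun i _ => hcopy i).const_mul (Fintype.card ι : ℝ)⁻¹ using 1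
  rw [Finset.sum_const, Finset.card_univ, nsmul_eq_mul]
  ext
  change (c : ℝ) / _ = ((Fintype.card ι : ℝ)⁻¹) ^ 2 * (Fintype.card ι * c)
  rcases eq_or_ne (Fintype.card ι : ℝ) 0 with h | h
  · simp [h]
  · simp only [NNReal.coe_natCast]
    field_simp

lemma measure_pi_ge_abs_average_sub_le [IsProbabilityMeasure μ] {ι : Type*} [Fintype ι]
    [Nonempty ι] {m : ℝ} (hX : HasSubgaussianMGF (fun ω => X ω - m) c μ) {ε : ℝ} (hε : 0 ≤ ε) :
    Measure.pi (fun _ : ι => μ) {ξ | ε ≤ |(1 / (Fintype.card ι : ℝ)) * ∑ i, X (ξ i) - m|}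
      ≤ ENNReal.ofReal (2 * Real.exp (-(Fintype.card ι * ε ^ 2) / (2 * c))) := by
  have haverage : ∀ ξ : ι → Ω, (1 / (Fintype.card ι : ℝ)) * ∑ i, X (ξ i) - m
      = (Fintype.card ι : ℝ)⁻¹ * ∑ i, (X (ξ i) - m) := fun ξ => by
    rw [Finset.sum_sub_distrib, Finset.sum_const, Finset.card_univ, nsmul_eq_mul, mul_sub,
      inv_mul_cancel_left₀ (by positivity), one_div]
  have hexponent : -(Fintype.card ι * ε ^ 2) / (2 * c)
      = -ε ^ 2 / (2 * (c / Fintype.card ι : NNReal)) := by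
    push_cast
    field_simp
  simp_rw [haverage, hexponent]
  exact measure_ge_abs_le_of_hasSubgaussianMGF (hasSubgaussianMGF_average_pi hX) hε

end Averages

section SkewSymmetric

lemma pos_of_ne_zero_of_abs_apply_le {m n α : Type*} [AddCommGroup α] [LinearOrder α]
    [IsOrderedAddMonoid α] {A : Matrix m n α} (hA : A ≠ 0) {a : α} (ha : ∀ i j, |A i j| ≤ a) :
    0 < a := by
  by_contra! hna
  exact hA (Matrix.ext fun i j => abs_nonpos_iff.1 ((ha i j).trans hna))

variable {m n : Type*} [Fintype m] [Fintype n]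
  {R : Type*} [Field R] [LinearOrder R] [IsStrictOrderedRing R]

lemma sq_trace_mul_le (B : Matrix m n R) (H : Matrix n m R) :
    (B * H).trace ^ 2 ≤ (B * Bᵀ).trace * ∑ i, ∑ j, H i j ^ 2 := by
  have h1 : (B * H).trace = ∑ p : m × n, B p.1 p.2 * H p.2 p.1 := by
    simp [Fintype.sum_prod_type, trace, mul_apply]
  have h2 : (B * Bᵀ).trace = ∑ p : m × n, B p.1 p.2 ^ 2 := by
    simp [Fintype.sum_prod_type, trace, mul_apply, sq]
  have h3 : ∑ i, ∑ j, H i j ^ 2 = ∑ p : m × n, H p.2 p.1 ^ 2 := by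
    rw [Fintype.sum_prod_type, Finset.sum_comm]
  rw [h1, h2, h3]
  exact Finset.sum_mul_sq_le_sq_mul_sq _ _ _

variable [DecidableEq n]

lemma hasDerivAt_det_one_add_smul {𝕜 : Type*} [NontriviallyNormedField 𝕜] (B : Matrix n n 𝕜) :
    HasDerivAt (fun τ : 𝕜 => (1 + τ • B).det) B.trace 0 := by
  set P := (det (1 + (Polynomial.X : Polynomial 𝕜) • B.map Polynomial.C)).divX.divX
  have hfun : (fun τ : 𝕜 => (1 + τ • B).det) = fun τ => 1 + B.trace * τ + P.eval τ * τ ^ 2 :=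
    funext fun τ => det_one_add_smul τ B
  have hlin := ((hasDerivAt_id (0 : 𝕜)).const_mul B.trace).const_add 1
  have hrest := (P.hasDerivAt 0).mul ((hasDerivAt_id (0 : 𝕜)).pow 2)
  rw [hfun]
  exact (hlin.add hrest).congr_deriv (by simp)

lemma hasDerivAt_log_det_add_smul {M : Matrix n n ℝ} (hM : M.det ≠ 0) (H : Matrix n n ℝ) :
    HasDerivAt (fun τ : ℝ => Real.log (M + τ • H).det) (M⁻¹ * H).trace 0 := by
  have hfac : ∀ τ : ℝ, (M + τ • H).det = M.det * (1 + τ • (M⁻¹ * H)).det := fun τ => by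
    rw [← det_mul, Matrix.mul_add, Matrix.mul_one, Matrix.mul_smul,
      mul_nonsing_inv_cancel_left _ _ hM.isUnit]
  simp_rw [hfac]
  simpa [hM] using ((hasDerivAt_det_one_add_smul (M⁻¹ * H)).const_mul M.det).log (by simpa using hM)

lemma det_smul_one_add_ne_zero_of_transpose_eq_neg {Y : Matrix n n R} (hY : Yᵀ = -Y) {s : R}
    (hs : s ≠ 0) : (s • (1 : Matrix n n R) + Y).det ≠ 0 := by
  intro hdet
  obtain ⟨v, hv, hMv⟩ := exists_mulVec_eq_zero_iff.2 hdet
  have hYv : v ⬝ᵥ (Y *ᵥ v) = 0 := by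
    have h : v ⬝ᵥ (Y *ᵥ v) = v ⬝ᵥ (Yᵀ *ᵥ v) := by
      rw [mulVec_transpose, dotProduct_comm v (v ᵥ* Y), dotProduct_mulVec]
    rw [hY, neg_mulVec, dotProduct_neg] at h
    linarith
  have hsv : s * (v ⬝ᵥ v) = 0 := by
    have := congrArg (v ⬝ᵥ ·) hMv
    simpa [add_mulVec, smul_mulVec, dotProduct_add, hYv] using this
  exact hv (dotProduct_self_eq_zero.1 ((mul_eq_zero.1 hsv).resolve_left hs))

/-- `2s (s + Y)⁻¹ - 1 = (s + Y)⁻¹ (s - Y)` is the Cayley transform of `Y`. -/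
lemma two_mul_smul_inv_sub_one_mem_orthogonalGroup {Y : Matrix n n R} (hY : Yᵀ = -Y) {s : R}
    (hs : s ≠ 0) :
    (2 * s) • (s • (1 : Matrix n n R) + Y)⁻¹ - 1 ∈ orthogonalGroup n R := by
  have hdet := (det_smul_one_add_ne_zero_of_transpose_eq_neg hY hs).isUnit
  set M := s • (1 : Matrix n n R) + Y with hM
  have hMT : Mᵀ = (2 * s) • (1 : Matrix n n R) - M := by
    simp only [hM, transpose_add, hY, transpose_smul, transpose_one]
    module
  have hcomm : Mᵀ * M = M * Mᵀ := by simp [hMT, Matrix.sub_mul, Matrix.mul_sub]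
  have hQ : (2 * s) • M⁻¹ - 1 = M⁻¹ * Mᵀ := by
    simp [hMT, Matrix.mul_sub, nonsing_inv_mul _ hdet]
  rw [mem_orthogonalGroup_iff, hQ, transpose_mul, transpose_transpose, transpose_nonsing_inv,
    Matrix.mul_assoc, ← Matrix.mul_assoc Mᵀ, hcomm, Matrix.mul_assoc M,
    mul_nonsing_inv _ (by simpa using hdet), Matrix.mul_one, nonsing_inv_mul _ hdet]

lemma sq_trace_inv_mul_le {Y H : Matrix n n R} (hY : Yᵀ = -Y) {s : R} (hs : s ≠ 0)
    (hH : H.trace = 0) :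
    ((s • (1 : Matrix n n R) + Y)⁻¹ * H).trace ^ 2
      ≤ Fintype.card n / (2 * s) ^ 2 * ∑ i, ∑ j, H i j ^ 2 := by
  set Q := (2 * s) • (s • (1 : Matrix n n R) + Y)⁻¹ - 1 with hQ
  have hQQ : Q * Qᵀ = 1 :=
    (mem_orthogonalGroup_iff n R).1 (two_mul_smul_inv_sub_one_mem_orthogonalGroup hY hs)
  have htr : (Q * H).trace = 2 * s * ((s • (1 : Matrix n n R) + Y)⁻¹ * H).trace := by
    simp [hQ, Matrix.sub_mul, hH]
  rw [div_mul_eq_mul_div, le_div_iff₀ (by positivity), mul_comm, ← mul_pow, ← htr]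
  simpa [hQQ] using sq_trace_mul_le Q H

lemma sum_sum_eq_two_mul_sum_subtype_lt {ι S : Type*} [Fintype ι] [LinearOrder ι]
    [NonAssocSemiring S] {f : ι → ι → S} (hsymm : ∀ i j, f i j = f j i) (hdiag : ∀ i, f i i = 0) :
    ∑ i, ∑ j, f i j = 2 * ∑ p : {p : ι × ι // p.1 < p.2}, f p.1.1 p.1.2 := by
  have hsplit : ∀ i j, f i j = (if i < j then f i j else 0) + if j < i then f j i else 0 := by
    intro i j
    rcases lt_trichotomy i j with hij | rfl | hij
    · simp [hij, hij.not_gt]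
    · simp [hdiag]
    · simp [hij, hij.not_gt, hsymm i j]
  have hsub : ∑ i, ∑ j, (if i < j then f i j else 0)
      = ∑ p : {p : ι × ι // p.1 < p.2}, f p.1.1 p.1.2 := by
    rw [← Fintype.sum_prod_type', ← Finset.sum_filter]
    exact Finset.sum_subtype _ (by simp) fun p : ι × ι => f p.1 p.2
  calc ∑ i, ∑ j, f i j
      = ∑ i, ∑ j, (if i < j then f i j else 0) + ∑ i, ∑ j, if j < i then f j i else 0 := by
        simp_rw [← Finset.sum_add_distrib, ← hsplit]
    _ = 2 * ∑ p : {p : ι × ι // p.1 < p.2}, f p.1.1 p.1.2 := by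
        rw [Finset.sum_comm (f := fun i j => if j < i then f j i else 0), hsub, two_mul]

end SkewSymmetric

section Sample

variable {N : ℕ} {A : Matrix (Fin N) (Fin N) ℝ} {a s : ℝ}

lemma sampleY_add_smul (A : Matrix (Fin N) (Fin N) ℝ) (ξ η : PairIdx N → ℝ) (τ : ℝ) :
    sampleY A (ξ + τ • η) = sampleY A ξ + τ • sampleY A η := by
  ext i j
  simp only [sampleY, of_apply, Matrix.add_apply, Matrix.smul_apply, Pi.add_apply, Pi.smul_apply,
    smul_eq_mul]
  split_ifs <;> ring

lemma trace_sampleY (A : Matrix (Fin N) (Fin N) ℝ) (ξ : PairIdx N → ℝ) :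
    (sampleY A ξ).trace = 0 := by
  simp [trace, sampleY]

lemma sampleY_transpose (hA : Aᵀ = -A) (ξ : PairIdx N → ℝ) :
    (sampleY A ξ)ᵀ = -sampleY A ξ := by
  ext i j
  have h : A j i = -A i j := congrFun (congrFun hA i) j
  simp only [sampleY, of_apply, transpose_apply, Matrix.neg_apply]
  rcases lt_trichotomy i j with hij | rfl | hij
  · simp [hij, hij.not_gt, h]
  · simp
  · simp [hij, hij.not_gt, h]

lemma sum_sq_sampleY_le (hA : Aᵀ = -A) (ha : ∀ i j, |A i j| ≤ a) (ξ : PairIdx N → ℝ) :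
    ∑ i, ∑ j, sampleY A ξ i j ^ 2 ≤ 2 * (a ^ 2 * ∑ p, ξ p ^ 2) := by
  have hskew : ∀ i j, sampleY A ξ j i = -sampleY A ξ i j := fun i j =>
    congrFun (congrFun (sampleY_transpose hA ξ) i) j
  rw [sum_sum_eq_two_mul_sum_subtype_lt (fun i j => by rw [hskew, neg_sq])
    (fun i => by simp [sampleY]), Finset.mul_sum _ _ (a ^ 2)]
  refine mul_le_mul_of_nonneg_left (Finset.sum_le_sum fun p _ => ?_) (zero_le_two (α := ℝ))
  simpa [sampleY, p.2, mul_pow] using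
    mul_le_mul_of_nonneg_right (sq_le_sq' (abs_le.1 (ha _ _)).1 (abs_le.1 (ha _ _)).2)
      (sq_nonneg (ξ p))

/-- The random variable `log det (s I + Y_A(ξ))`, on the Euclidean space of the edge weights. -/
noncomputable def logDetSample (s : ℝ) (A : Matrix (Fin N) (Fin N) ℝ)
    (ξ : EuclideanSpace ℝ (PairIdx N)) : ℝ :=
  Real.log (s • (1 : Matrix (Fin N) (Fin N) ℝ) + sampleY A ξ).det

lemma differentiable_logDetSample (hA : Aᵀ = -A) (hs : s ≠ 0) :
    Differentiable ℝ (logDetSample s A) := by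
  have hentry : ∀ i j, ContDiff ℝ 1 fun ξ : EuclideanSpace ℝ (PairIdx N) =>
      (s • (1 : Matrix (Fin N) (Fin N) ℝ) + sampleY A ξ) i j := fun i j => by
    simp only [sampleY, Matrix.add_apply, of_apply]
    split_ifs <;> fun_prop
  have hdet : ContDiff ℝ 1 fun ξ : EuclideanSpace ℝ (PairIdx N) =>
      (s • (1 : Matrix (Fin N) (Fin N) ℝ) + sampleY A ξ).det := by
    simp_rw [det_apply]
    exact .sum fun σ _ => (contDiff_prod fun i _ => hentry (σ i) i).const_smul _
  exact (hdet.differentiable one_ne_zero).log fun ξ =>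
    det_smul_one_add_ne_zero_of_transpose_eq_neg (sampleY_transpose hA ξ) hs

lemma fderiv_logDetSample (hA : Aᵀ = -A) (hs : s ≠ 0) (ξ η : EuclideanSpace ℝ (PairIdx N)) :
    fderiv ℝ (logDetSample s A) ξ η
      = ((s • (1 : Matrix (Fin N) (Fin N) ℝ) + sampleY A ξ)⁻¹ * sampleY A η).trace := by
  rw [← (differentiable_logDetSample hA hs ξ).lineDeriv_eq_fderiv]
  refine HasLineDerivAt.lineDeriv ((hasDerivAt_log_det_add_smul
    (det_smul_one_add_ne_zero_of_transpose_eq_neg (sampleY_transpose hA ξ) hs)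
    (sampleY A η)).congr_of_eventuallyEq (.of_forall fun τ => ?_))
  simp only [logDetSample, WithLp.ofLp_add, WithLp.ofLp_smul, sampleY_add_smul, add_assoc]

lemma norm_fderiv_logDetSample_le (hA : Aᵀ = -A) (ha : ∀ i j, |A i j| ≤ a) (hs : s ≠ 0)
    (ξ : EuclideanSpace ℝ (PairIdx N)) :
    ‖fderiv ℝ (logDetSample s A) ξ‖ ≤ √(a ^ 2 * N / (2 * s ^ 2)) := by
  refine ContinuousLinearMap.opNorm_le_bound _ (Real.sqrt_nonneg _) fun η => ?_
  refine abs_le_of_sq_le_sq ?_ (by positivity)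
  rw [mul_pow, Real.sq_sqrt (by positivity), fderiv_logDetSample hA hs, EuclideanSpace.norm_sq_eq]
  calc ((s • (1 : Matrix (Fin N) (Fin N) ℝ) + sampleY A ξ)⁻¹ * sampleY A η).trace ^ 2
      ≤ N / (2 * s) ^ 2 * ∑ i, ∑ j, sampleY A η i j ^ 2 := by
        simpa using sq_trace_inv_mul_le (sampleY_transpose hA ξ) hs (trace_sampleY A η)
    _ ≤ N / (2 * s) ^ 2 * (2 * (a ^ 2 * ∑ p, η p ^ 2)) := by
        gcongr
        exact sum_sq_sampleY_le hA ha η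
    _ = a ^ 2 * N / (2 * s ^ 2) * ∑ p, ‖η p‖ ^ 2 := by
        simp only [Real.norm_eq_abs, sq_abs]
        field_simp

lemma lipschitzWith_logDetSample (hA : Aᵀ = -A) (ha : ∀ i j, |A i j| ≤ a) (hs : s ≠ 0) :
    LipschitzWith (√(a ^ 2 * N / (2 * s ^ 2))).toNNReal (logDetSample s A) :=
  lipschitzWith_of_nnnorm_fderiv_le (𝕜 := ℝ) (differentiable_logDetSample hA hs) fun ξ =>
    NNReal.le_toNNReal_of_coe_le (norm_fderiv_logDetSample_le hA ha hs ξ)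

instance (N : ℕ) : IsProbabilityMeasure (gaussPi N) :=
  inferInstanceAs (IsProbabilityMeasure (Measure.pi fun _ => gaussianReal 0 1))

lemma measurePreserving_toLp_gaussPi (N : ℕ) :
    MeasurePreserving (WithLp.toLp 2) (gaussPi N) (stdGaussian (EuclideanSpace ℝ (PairIdx N))) :=
  ⟨by fun_prop, map_pi_eq_stdGaussian⟩

lemma hasSubgaussianMGF_logDetSample (hA : Aᵀ = -A) (ha : ∀ i j, |A i j| ≤ a) {t : ℝ}
    (ht : 0 < t) :
    HasSubgaussianMGF (fun ξ => logDetSample √t A (WithLp.toLp 2 ξ) - logPhiTilde t A)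
      (a ^ 2 * N / (2 * t)).toNNReal (gaussPi N) := by
  have hs : √t ≠ 0 := (Real.sqrt_pos.2 ht).ne'
  have hmap := measurePreserving_toLp_gaussPi N
  have hmean : ∫ ξ, logDetSample √t A ξ ∂stdGaussian _ = logPhiTilde t A := by
    rw [← hmap.map_eq, integral_map hmap.aemeasurable
      (differentiable_logDetSample hA hs).continuous.aestronglyMeasurable]
    rfl
  have hconst : (√(a ^ 2 * N / (2 * √t ^ 2))).toNNReal ^ 2 = (a ^ 2 * N / (2 * t)).toNNReal := by
    rw [← Real.toNNReal_pow (Real.sqrt_nonneg _), Real.sq_sqrt (by positivity),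
      Real.sq_sqrt ht.le]
  rw [← hmean, ← hconst]
  have hsub := hasSubgaussianMGF_stdGaussian_of_lipschitzWith (differentiable_logDetSample hA hs)
    (lipschitzWith_logDetSample hA ha hs)
  rw [← hmap.map_eq] at hsub ⊢
  exact hsub.of_map hmap.aemeasurable

end Sample

theorem concentration_log_det_k_samples_general
    {N : ℕ} (A : Matrix (Fin N) (Fin N) ℝ) (hA : Aᵀ = -A)
    (a : ℝ) (ha0 : 0 < a) (ha : ∀ i j, |A i j| ≤ a)
    (t : ℝ) (ht : 0 < t) (k : ℕ) (hk : 1 ≤ k) (r : ℝ) (hr : 0 ≤ r) :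
    (Measure.pi fun _ : Fin k => gaussPi N) {ξ | (N : ℝ) * r ≤
        |(1 / (k : ℝ)) * ∑ i : Fin k,
            Real.log ((Real.sqrt t • (1 : Matrix (Fin N) (Fin N) ℝ) +
              sampleY A (ξ i)).det) -
          logPhiTilde t A|} ≤
      ENNReal.ofReal (2 * Real.exp (-(t * k * N * r ^ 2) / a ^ 2)) := by
  have : Nonempty (Fin k) := ⟨⟨0, hk⟩⟩
  have hexponent : -(t * k * N * r ^ 2) / a ^ 2
      = -(k * (N * r) ^ 2) / (2 * (a ^ 2 * N / (2 * t)).toNNReal) := by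
    rw [Real.coe_toNNReal _ (by positivity)]
    rcases eq_or_ne (N : ℝ) 0 with hN | hN
    · simp [hN]
    · field_simp
  have htail := measure_pi_ge_abs_average_sub_le (ι := Fin k)
    (X := fun ξ => logDetSample √t A (WithLp.toLp 2 ξ))
    (hasSubgaussianMGF_logDetSample hA ha ht) (by positivity : 0 ≤ (N : ℝ) * r)
  rwa [Fintype.card_fin, ← hexponent] at htail

/-- concentration for `k` independent samples:
`Pr(|(1/k) Σ_i log det(√t I + Y_A(ξ_i)) - log Φ̃(t,A)| ≥ Nr) ≤ 2 exp(-tkNr²/(2a²))`. -/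
theorem concentration_log_det_k_samples
    {N : ℕ} (A : Matrix (Fin N) (Fin N) ℝ) (hA : Aᵀ = -A) (hA0 : A ≠ 0)
    (a : ℝ) (ha : ∀ i j, |A i j| ≤ a) (ha' : ∃ i j, |A i j| = a)
    (t : ℝ) (ht : 0 < t) (k : ℕ) (hk : 1 ≤ k) (r : ℝ) (hr : 0 < r) :
    (Measure.pi fun _ : Fin k => gaussPi N) {ξ | (N : ℝ) * r ≤
        |(1 / (k : ℝ)) * ∑ i : Fin k,
            Real.log ((Real.sqrt t • (1 : Matrix (Fin N) (Fin N) ℝ) +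
              sampleY A (ξ i)).det) -
          logPhiTilde t A|} ≤
      ENNReal.ofReal (2 * Real.exp (-(t * k * N * r ^ 2) / (2 * a ^ 2))) := by
  have ha0 := pos_of_ne_zero_of_abs_apply_le hA0 ha
  refine (concentration_log_det_k_samples_general A hA a ha0 ha t ht k hk r hr.le).trans ?_
  gcongr ENNReal.ofReal (2 * Real.exp ?_)
  rw [neg_div, neg_div, neg_le_neg_iff]
  exact div_le_div_of_nonneg_left (by positivity) (by positivity) (by linarith [sq_nonneg a])
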